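/- arXiv:2506.20546 — 2 statements merged into one kernel-verified Lean document; each statement's English description precedes it below -/
import Mathlib

section
/- Let h : ℝ^d → ℝ be continuously differentiable, G-Lipschitz and L-smooth, and let r > 0. Define the smoothed function h^r(z) = E_{v̄ ∼ Uniform(B_d)}[h(z + r v̄)], where B_d is the closed unit ball of ℝ^d, and the two-point estimator G_h(z;r;v) = (d/r)(h(z + r v) − h(z)) · v. Then for every z ∈ ℝ^d, ∇h^r(z) = E_{v ∼ Uniform(S^{d−1})}[G_h(z;r;v)], where S^{d−1} is the unit sphere of ℝ^d. -/
set_option autoImplicit false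

open MeasureTheory Metric
open scoped RealInnerProductSpace ENNReal

noncomputable section

/-- `ℝ^d` as a Euclidean space. -/
abbrev Euc (n : ℕ) := EuclideanSpace ℝ (Fin n)

/-- The uniform (normalized Lebesgue) probability measure on the closed unit ball of `ℝ^d`. -/
def ballUniform (d : ℕ) : Measure (Euc d) :=
  (volume (closedBall (0 : Euc d) 1))⁻¹ • volume.restrict (closedBall (0 : Euc d) 1)

/-- The uniform (normalized surface) probability measure on the unit sphere of `ℝ^d`,
obtained by normalizing the surface measure `volume.toSphere` and pushing it forward to `ℝ^d`. -/
def sphereUniform (d : ℕ) : Measure (Euc d) :=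
  ((volume : Measure (Euc d)).toSphere Set.univ)⁻¹ •
    Measure.map Subtype.val (volume : Measure (Euc d)).toSphere

open Measure in
/-- Polar coordinates for the integral of an integrable function. -/
theorem integral_polar {E F : Type*} [NormedAddCommGroup E] [NormedSpace ℝ E] [Nontrivial E]
    [FiniteDimensional ℝ E] [MeasurableSpace E] [BorelSpace E] [NormedAddCommGroup F]
    [NormedSpace ℝ F] (μ : Measure E) [μ.IsAddHaarMeasure] {f : E → F} (hf : Integrable f μ) :
    ∫ x, f x ∂μ = ∫ s in Set.Ioi (0 : ℝ), s ^ (Module.finrank ℝ E - 1) •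
      ∫ u : sphere (0 : E) 1, f (s • (u : E)) ∂μ.toSphere := by
  have hmp := μ.measurePreserving_homeomorphUnitSphereProd
  have hemb := (homeomorphUnitSphereProd E).measurableEmbedding
  set g : sphere (0 : E) 1 × Set.Ioi (0 : ℝ) → F := fun p => f ((p.2 : ℝ) • (p.1 : E)) with hg
  have hgf : ∀ x : ({0}ᶜ : Set E), g (homeomorphUnitSphereProd E x) = f x := by
    intro x
    have h0 : ‖(x : E)‖ ≠ 0 := norm_ne_zero_iff.2 x.2
    simp [hg, smul_smul, h0]
  have hgi : Integrable g (μ.toSphere.prod (volumeIoiPow (Module.finrank ℝ E - 1))) := by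
    rw [← hmp.integrable_comp_emb hemb]
    have : g ∘ homeomorphUnitSphereProd E = f ∘ Subtype.val := funext hgf
    rw [this, ← integrableOn_iff_comap_subtypeVal (by measurability)]
    exact hf.integrableOn
  calc
    ∫ x, f x ∂μ = ∫ x : ({0}ᶜ : Set E), f x ∂(μ.comap (↑)) := by
      rw [integral_subtype_comap (measurableSet_singleton _).compl fun x ↦ f x,
        restrict_compl_singleton]
    _ = ∫ p, g p ∂μ.toSphere.prod (volumeIoiPow (Module.finrank ℝ E - 1)) := by
      rw [← hmp.integral_comp hemb]
      simp only [hgf]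
    _ = ∫ s : Set.Ioi (0 : ℝ), ∫ u, g (u, s) ∂μ.toSphere
          ∂volumeIoiPow (Module.finrank ℝ E - 1) := integral_prod_symm g hgi
    _ = _ := by
      simp only [hg, volumeIoiPow, ENNReal.ofReal]
      rw [integral_withDensity_eq_integral_smul
          ((measurable_subtype_coe.pow_const _).real_toNNReal),
        integral_subtype_comap measurableSet_Ioi fun s : ℝ ↦
          Real.toNNReal (s ^ (Module.finrank ℝ E - 1)) •
            ∫ u : sphere (0 : E) 1, f (s • (u : E)) ∂μ.toSphere]
      refine setIntegral_congr_fun measurableSet_Ioi fun s hs ↦ ?_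
      simp only [NNReal.smul_def, Real.coe_toNNReal _ (pow_nonneg (le_of_lt hs) _)]

/-- Polar coordinates for the integral over a ball centred at the origin. -/
theorem setIntegral_ball_polar {E F : Type*} [NormedAddCommGroup E] [NormedSpace ℝ E]
    [Nontrivial E] [FiniteDimensional ℝ E] [MeasurableSpace E] [BorelSpace E]
    [NormedAddCommGroup F] [NormedSpace ℝ F] (μ : Measure E) [μ.IsAddHaarMeasure] {f : E → F}
    {R : ℝ} (hR : 0 ≤ R) (hf : IntegrableOn f (ball 0 R) μ) :
    ∫ x in ball 0 R, f x ∂μ = ∫ s in (0 : ℝ)..R, s ^ (Module.finrank ℝ E - 1) •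
      ∫ u : sphere (0 : E) 1, f (s • (u : E)) ∂μ.toSphere := by
  rw [← integral_indicator measurableSet_ball,
    integral_polar μ ((integrable_indicator_iff measurableSet_ball).2 hf),
    intervalIntegral.integral_of_le hR, integral_Ioc_eq_integral_Ioo,
    ← Set.Ioi_inter_Iio, ← setIntegral_indicator measurableSet_Iio]
  refine setIntegral_congr_fun measurableSet_Ioi fun s hs ↦ ?_
  by_cases h : s < R <;> simp [Set.indicator, norm_smul, abs_of_pos (Set.mem_Ioi.1 hs), h]

theorem hasFDerivAt_norm_of_ne {E : Type*} [NormedAddCommGroup E] [InnerProductSpace ℝ E]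
    {x : E} (hx : x ≠ 0) : HasFDerivAt (fun y : E => ‖y‖) (‖x‖⁻¹ • innerSL ℝ x) x := by
  have h := ((hasStrictFDerivAt_norm_sq x).hasFDerivAt).sqrt (by positivity)
  simp only [Real.sqrt_sq (norm_nonneg _)] at h
  convert h using 1
  ext y
  simp
  field_simp

/-- Integration by parts against the Lipschitz cutoff `max (R - ‖x‖) 0`. -/
theorem integral_tent_mul_fderiv {E : Type*} [NormedAddCommGroup E] [InnerProductSpace ℝ E]
    [Nontrivial E] [FiniteDimensional ℝ E] [MeasurableSpace E] [BorelSpace E]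
    (μ : Measure E) [μ.IsAddHaarMeasure] {f : E → ℝ} {C : NNReal}
    (hd : Differentiable ℝ f) (hf : LipschitzWith C f) (w : E) (R : ℝ) :
    ∫ x in ball 0 R, (R - ‖x‖) * fderiv ℝ f x w ∂μ =
      ∫ x in ball 0 R, ‖x‖⁻¹ * ⟪x, w⟫ * f x ∂μ := by
  set g : E → ℝ := fun x => max (R - ‖x‖) 0 with hg
  have hgL : LipschitzWith 1 g := by
    refine LipschitzWith.max_const ?_ 0
    refine LipschitzWith.of_dist_le_mul fun x y => ?_
    simpa [dist_eq_norm, abs_sub_comm] using abs_norm_sub_norm_le x y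
  have hgs : HasCompactSupport g := by
    refine HasCompactSupport.intro (isCompact_closedBall (0 : E) R) fun x hx => ?_
    simp only [mem_closedBall, dist_zero_right, not_le] at hx
    simp [hg, hx.le]
  have key := hf.integral_lineDeriv_mul_eq (μ := μ) hgL hgs w
  rw [← integral_indicator measurableSet_ball, ← integral_indicator measurableSet_ball]
  convert key using 1
  · congr 1 with x
    rw [(hd x).lineDeriv_eq_fderiv]
    by_cases h : ‖x‖ < R
    · simp [Set.indicator, h, hg, max_eq_left (sub_nonneg.2 h.le), mul_comm]
    · simp [Set.indicator, h, hg, max_eq_right (sub_nonpos.2 (not_lt.1 h))]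
  · refine integral_congr_ae ?_
    have h0 : ∀ᵐ x ∂μ, x ∉ ({0} : Set E) := measure_eq_zero_iff_ae_notMem.1 (by simp)
    have hS : ∀ᵐ x ∂μ, x ∉ sphere (0 : E) R :=
      measure_eq_zero_iff_ae_notMem.1 (Measure.addHaar_sphere μ 0 R)
    filter_upwards [h0, hS] with x hx0 hxS
    simp only [mem_sphere, dist_zero_right] at hxS
    by_cases h : ‖x‖ < R
    · have hD : HasFDerivAt g (-(‖x‖⁻¹ • innerSL ℝ x)) x := by
        refine ((hasFDerivAt_norm_of_ne hx0).const_sub R).congr_of_eventuallyEq ?_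
        filter_upwards [continuous_norm.continuousAt.eventually_lt_const h] with y hy
        exact max_eq_left (sub_nonneg.2 hy.le)
      rw [hD.hasLineDerivAt (-w) |>.lineDeriv]
      simp [Set.indicator, h]
    · have h' : R < ‖x‖ := lt_of_le_of_ne (not_lt.1 h) (Ne.symm hxS)
      have hD : HasFDerivAt g (0 : E →L[ℝ] ℝ) x := by
        refine (hasFDerivAt_const (0 : ℝ) x).congr_of_eventuallyEq ?_
        filter_upwards [continuous_norm.continuousAt.eventually_const_lt h'] with y hy
        exact max_eq_right (sub_nonpos.2 hy.le)
      rw [hD.hasLineDerivAt (-w) |>.lineDeriv]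
      simp [Set.indicator, h]

theorem continuous_sphere_integral {E : Type*} [NormedAddCommGroup E] [NormedSpace ℝ E]
    [FiniteDimensional ℝ E] [MeasurableSpace E] [BorelSpace E]
    (μ : Measure E) [μ.IsAddHaarMeasure] {k : ℝ → sphere (0 : E) 1 → ℝ}
    (hk : Continuous (Function.uncurry k)) :
    Continuous fun s : ℝ => ∫ u, k s u ∂μ.toSphere := by
  simpa using continuous_parametric_integral_of_continuous (μ := μ.toSphere) hk isCompact_univ

/-- The divergence theorem on the unit ball for a Lipschitz `C¹` function times a constant vector.
It follows by differentiating `integral_tent_mul_fderiv`, in polar coordinates, at `R = 1`. -/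
theorem integral_ball_fderiv_eq_integral_sphere {E : Type*} [NormedAddCommGroup E]
    [InnerProductSpace ℝ E]
    [Nontrivial E] [FiniteDimensional ℝ E] [MeasurableSpace E] [BorelSpace E]
    (μ : Measure E) [μ.IsAddHaarMeasure] {f : E → ℝ} {C : NNReal}
    (hd : ContDiff ℝ 1 f) (hf : LipschitzWith C f) (w : E) :
    ∫ x in ball 0 1, fderiv ℝ f x w ∂μ =
      ∫ u : sphere (0 : E) 1, ⟪(u : E), w⟫ * f u ∂μ.toSphere := by
  set n := Module.finrank ℝ E - 1
  have hfc : Continuous f := hd.continuous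
  have hf' : Continuous fun x => fderiv ℝ f x w := by
    have := hd.continuous_fderiv one_ne_zero
    fun_prop
  set a : ℝ → ℝ := fun s => s ^ n * ∫ u : sphere (0 : E) 1, fderiv ℝ f (s • (u : E)) w ∂μ.toSphere
    with ha
  set b : ℝ → ℝ := fun s => s ^ n * ∫ u : sphere (0 : E) 1, ⟪(u : E), w⟫ * f (s • (u : E))
    ∂μ.toSphere with hb
  have hac : Continuous a := by
    refine (continuous_pow n).mul (continuous_sphere_integral μ ?_)
    exact hf'.comp (by fun_prop : Continuous fun p : ℝ × sphere (0 : E) 1 => p.1 • (p.2 : E))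
  have hbc : Continuous b := by
    refine (continuous_pow n).mul (continuous_sphere_integral μ ?_)
    simp only [Function.uncurry_def]
    fun_prop
  have hint : ∀ {k : E → ℝ} (R : ℝ), Continuous k → IntegrableOn k (ball 0 R) μ := fun R hk =>
    (hk.continuousOn.integrableOn_compact (isCompact_closedBall 0 R)).mono_set
      ball_subset_closedBall
  have key : ∀ R : ℝ, 0 < R → R * (∫ s in (0 : ℝ)..R, a s) - ∫ s in (0 : ℝ)..R, s * a s =
      ∫ s in (0 : ℝ)..R, b s := by
    intro R hR
    have h := integral_tent_mul_fderiv μ (hd.differentiable one_ne_zero) hf w R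
    have hi : IntegrableOn (fun x => ‖x‖⁻¹ * ⟪x, w⟫ * f x) (ball 0 R) μ := by
      refine Integrable.mono' (hint R ((continuous_const (y := ‖w‖)).mul hfc.norm))
        (by fun_prop) (.of_forall fun x => ?_)
      rw [norm_mul]
      refine mul_le_mul_of_nonneg_right ?_ (norm_nonneg _)
      rw [norm_mul, norm_inv, norm_norm]
      rcases eq_or_ne x 0 with rfl | hx
      · simp
      · rw [inv_mul_le_iff₀ (norm_pos_iff.2 hx)]
        exact norm_inner_le_norm x w
    rw [setIntegral_ball_polar μ hR.le (hint R (by fun_prop)), setIntegral_ball_polar μ hR.le hi] at h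
    rw [← intervalIntegral.integral_const_mul, ← intervalIntegral.integral_sub
      ((hac.const_mul R).intervalIntegrable _ _)
      ((show Continuous fun s => s * a s from continuous_id.mul hac).intervalIntegrable _ _)]
    convert h using 1
    · refine intervalIntegral.integral_congr_uIoo fun s hs => ?_
      rw [Set.uIoo_of_le hR.le] at hs
      simp [norm_smul, abs_of_pos hs.1, integral_const_mul, ha]
      ring
    · refine intervalIntegral.integral_congr_uIoo fun s hs => ?_
      rw [Set.uIoo_of_le hR.le] at hs
      simp [norm_smul, abs_of_pos hs.1, inner_smul_left, hs.1.ne', hb, n]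
  have hA : ∀ k : ℝ → ℝ, Continuous k →
      HasDerivAt (fun R => ∫ s in (0 : ℝ)..R, k s) (k 1) 1 := fun k hk =>
    intervalIntegral.integral_hasDerivAt_right (hk.intervalIntegrable _ _)
      (hk.stronglyMeasurableAtFilter _ _) hk.continuousAt
  have h1 := ((hasDerivAt_id (1 : ℝ)).mul (hA a hac)).sub (hA _ (continuous_id.mul hac))
  have h2 := (hA b hbc).congr_of_eventuallyEq
    (Filter.eventually_of_mem (Ioi_mem_nhds one_pos) key)
  have h3 := h1.unique h2
  rw [setIntegral_ball_polar μ zero_le_one (hint 1 hf')]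
  simpa [ha, hb] using h3

/-- **Unbiasedness of the two-point gradient estimator for the smoothed function.**
If `h : ℝ^d → ℝ` is continuously differentiable, `G`-Lipschitz and `L`-smooth, `r > 0`,
and `h^r(z) = E_{v̄ ∼ U(B_d)}[h(z + r v̄)]`, then for every `z`,
`∇h^r(z) = E_{v ∼ U(S^{d-1})}[(d/r)(h(z + r v) - h(z)) v]`. -/
theorem two_point_estimator_unbiased_for_smoothed
    {d : ℕ} (hd : 0 < d) (h : Euc d → ℝ) (G L : ℝ)
    (hC1 : ContDiff ℝ 1 h)
    (hLip : ∀ z₁ z₂ : Euc d, |h z₁ - h z₂| ≤ G * ‖z₁ - z₂‖)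
    (hsmooth : ∀ z₁ z₂ : Euc d, ‖gradient h z₁ - gradient h z₂‖ ≤ L * ‖z₁ - z₂‖)
    (r : ℝ) (hr : 0 < r) (z : Euc d) :
    gradient (fun z' => ∫ v, h (z' + r • v) ∂(ballUniform d)) z
      = ∫ v, (((d : ℝ) / r) * (h (z + r • v) - h z)) • v ∂(sphereUniform d) := by
  have : NeZero d := ⟨hd.ne'⟩
  have : Nontrivial (Euc d) := inferInstance
  set V := volume (ball (0 : Euc d) 1) with hV
  have hV0 : V ≠ 0 := (measure_ball_pos volume _ one_pos).ne'
  have hVt : V ≠ ⊤ := measure_ball_lt_top.ne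
  have hae : closedBall (0 : Euc d) 1 =ᵐ[volume] ball (0 : Euc d) 1 := by
    rw [← ball_union_sphere]
    exact union_ae_eq_left_of_ae_eq_empty
      (ae_eq_empty.2 (Measure.addHaar_sphere volume (0 : Euc d) 1))
  have hball : ballUniform d = V⁻¹ • volume.restrict (ball (0 : Euc d) 1) := by
    rw [ballUniform, Measure.addHaar_closedBall_eq_addHaar_ball,
      Measure.restrict_congr_set hae]
  have hfin : IsFiniteMeasure (ballUniform d) := by
    rw [hball]
    have : IsFiniteMeasure (volume.restrict (ball (0 : Euc d) 1)) :=
      isFiniteMeasure_restrict.2 hVt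
    exact Measure.smul_finite _ (ENNReal.inv_ne_top.2 hV0)
  have hLip' : LipschitzWith G.toNNReal h := LipschitzWith.of_dist_le_mul fun x y => by
    rw [Real.dist_eq, dist_eq_norm]
    exact (hLip x y).trans (by gcongr; exact Real.le_coe_toNNReal G)
  have hh' : Continuous (fderiv ℝ h) := hC1.continuous_fderiv one_ne_zero
  have hhc : Continuous h := hC1.continuous
  have hbint : ∀ {F : Type} [NormedAddCommGroup F] {k : Euc d → F}, Continuous k →
      Integrable k (ballUniform d) := fun hk => by
    rw [hball]
    exact (((hk.continuousOn.integrableOn_compact (isCompact_closedBall 0 1)).mono_set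
      ball_subset_closedBall)).smul_measure (ENNReal.inv_ne_top.2 hV0)
  have hder : HasFDerivAt (fun z' => ∫ v, h (z' + r • v) ∂(ballUniform d))
      (∫ v, fderiv ℝ h (z + r • v) ∂(ballUniform d)) z := by
    refine hasFDerivAt_integral_of_dominated_of_fderiv_le (bound := fun _ => (G.toNNReal : ℝ))
      (F' := fun z' v => fderiv ℝ h (z' + r • v)) Filter.univ_mem
      (.of_forall fun z' => ?_) (hbint (by fun_prop)) ?_
      (.of_forall fun v z' _ => norm_fderiv_le_of_lipschitz ℝ hLip') (integrable_const _)
      (.of_forall fun v z' _ => ?_)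
    · exact (show Continuous fun v => h (z' + r • v) by fun_prop).aestronglyMeasurable
    · exact (show Continuous fun v => fderiv ℝ h (z + r • v) by fun_prop).aestronglyMeasurable
    · have := ((hC1.differentiable one_ne_zero) (z' + r • v)).hasFDerivAt
      simpa [Function.comp_def] using this.comp z' ((hasFDerivAt_id z').add_const (r • v))
  set f : Euc d → ℝ := fun v => h (z + r • v) - h z with hf
  have hfd : ∀ v, fderiv ℝ f v = r • fderiv ℝ h (z + r • v) := fun v => by
    have h1 : HasFDerivAt (fun v : Euc d => z + r • v) (r • ContinuousLinearMap.id ℝ (Euc d)) v :=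
      ((hasFDerivAt_id v).const_smul r).const_add z
    have h2 := ((hC1.differentiable one_ne_zero) (z + r • v)).hasFDerivAt.comp v h1
    rw [show fderiv ℝ f v = _ from (h2.sub_const (h z)).fderiv]
    ext w
    simp
  have hfL : LipschitzWith (G.toNNReal * r.toNNReal) f := LipschitzWith.of_dist_le_mul fun x y => by
    have := hLip'.dist_le_mul (z + r • x) (z + r • y)
    simpa [hf, dist_smul₀, abs_of_pos hr, hr.le, mul_assoc] using this
  have hfC : ContDiff ℝ 1 f := by fun_prop
  refine ext_inner_left ℝ fun w => ?_
  have key := integral_ball_fderiv_eq_integral_sphere volume hfC hfL w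
  have hemb := MeasurableEmbedding.subtype_coe (isClosed_sphere (x := (0 : Euc d)) (ε := 1)).measurableSet
  have hsi : Integrable (fun v => (((d : ℝ) / r) * (h (z + r • v) - h z)) • v)
      (sphereUniform d) := by
    refine Integrable.smul_measure ?_ (ENNReal.inv_ne_top.2 (Measure.measure_univ_ne_zero.2
      (Measure.toSphere_ne_zero volume)))
    rw [hemb.integrable_map_iff]
    exact Continuous.integrable_of_hasCompactSupport (by fun_prop) (.of_compactSpace _)
  have hlhs : ⟪w, gradient (fun z' => ∫ v, h (z' + r • v) ∂(ballUniform d)) z⟫ =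
      V.toReal⁻¹ * ∫ v in ball (0 : Euc d) 1, fderiv ℝ h (z + r • v) w := by
    rw [gradient, hder.fderiv, real_inner_comm, InnerProductSpace.toDual_symm_apply,
      ContinuousLinearMap.integral_apply (hbint (by fun_prop)), hball, integral_smul_measure,
      ENNReal.toReal_inv, smul_eq_mul]
  have hrhs : ⟪w, ∫ v, (((d : ℝ) / r) * (h (z + r • v) - h z)) • v ∂(sphereUniform d)⟫ =
      (d * V.toReal)⁻¹ * (d / r * ∫ u : sphere (0 : Euc d) 1, ⟪(u : Euc d), w⟫ * f u
        ∂(volume : Measure (Euc d)).toSphere) := by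
    rw [← integral_inner hsi, sphereUniform, integral_smul_measure, hemb.integral_map,
      Measure.toSphere_apply_univ, ← integral_const_mul]
    simp only [finrank_euclideanSpace, Fintype.card_fin, ENNReal.toReal_inv, ENNReal.toReal_mul,
      ENNReal.toReal_natCast, smul_eq_mul, inner_smul_right, hf, ← hV]
    congr 2 with u
    rw [real_inner_comm]
    ring
  have hd0 : (d : ℝ) ≠ 0 := Nat.cast_ne_zero.2 hd.ne'
  have hVr : V.toReal ≠ 0 := ENNReal.toReal_ne_zero.2 ⟨hV0, hVt⟩
  simp only [hfd, smul_apply, smul_eq_mul, integral_const_mul] at key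
  rw [hlhs, hrhs, ← key]
  field_simp

end
end

section
/- Let h : ℝ^d → ℝ be continuously differentiable, G-Lipschitz and L-smooth, and let r > 0. Define h^r(z) = E_{v̄ ∼ Uniform(B_d)}[h(z + r v̄)] and the two-point estimator G_h(z;r;v) = (d/r)(h(z + r v) − h(z)) · v. Then for every z ∈ ℝ^d the variance bound E_{v ∼ Uniform(S^{d−1})}[‖G_h(z;r;v) − ∇h^r(z)‖²] ≤ 9 d² G² / (d + 2) + 3 d² L² r² / 4 holds. -/
set_option autoImplicit false

open MeasureTheory Metric
open scoped RealInnerProductSpace ENNReal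

noncomputable section

lemma isProbabilityMeasure_ballUniform (d : ℕ) : IsProbabilityMeasure (ballUniform d) := by
  refine ⟨?_⟩
  rw [ballUniform, Measure.smul_apply, Measure.restrict_apply_univ, smul_eq_mul]
  exact ENNReal.inv_mul_cancel (measure_closedBall_pos volume _ one_pos).ne'
    measure_closedBall_lt_top.ne

lemma ae_norm_le_one_ballUniform (d : ℕ) : ∀ᵐ u ∂(ballUniform d), ‖u‖ ≤ 1 := by
  refine Measure.ae_smul_measure ?_ _
  filter_upwards [ae_restrict_mem measurableSet_closedBall] with u hu
  simpa using hu

lemma isProbabilityMeasure_sphereUniform {d : ℕ} (hd : 0 < d) :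
    IsProbabilityMeasure (sphereUniform d) := by
  have : NeZero d := ⟨hd.ne'⟩
  refine ⟨?_⟩
  rw [sphereUniform, Measure.smul_apply, Measure.map_apply measurable_subtype_coe .univ,
    Set.preimage_univ, smul_eq_mul]
  refine ENNReal.inv_mul_cancel ?_ (measure_ne_top _ _)
  rw [Ne, Measure.measure_univ_eq_zero]
  exact Measure.toSphere_ne_zero _

lemma ae_norm_eq_one_sphereUniform (d : ℕ) : ∀ᵐ v ∂(sphereUniform d), ‖v‖ = 1 := by
  refine Measure.ae_smul_measure ?_ _
  rw [ae_map_iff measurable_subtype_coe.aemeasurable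
    (measurableSet_eq_fun measurable_norm measurable_const)]
  exact Filter.Eventually.of_forall fun v => norm_eq_of_mem_sphere v

open scoped Pointwise in
/-- The uniform measure on the sphere is invariant under linear isometries. -/
lemma measurePreserving_sphereUniform {d : ℕ} (T : Euc d ≃ₗᵢ[ℝ] Euc d) :
    MeasurePreserving T (sphereUniform d) (sphereUniform d) := by
  have hT : Measurable T := T.continuous.measurable
  refine ⟨hT, ?_⟩
  ext A hA
  rw [Measure.map_apply hT hA]
  simp only [sphereUniform, Measure.smul_apply]
  rw [Measure.map_apply measurable_subtype_coe hA,
    Measure.map_apply measurable_subtype_coe (hT hA),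
    Measure.toSphere_apply' _ (measurable_subtype_coe hA),
    Measure.toSphere_apply' _ (measurable_subtype_coe (hT hA)),
    Subtype.image_preimage_coe, Subtype.image_preimage_coe]
  have key : Set.Ioo (0 : ℝ) 1 • (sphere (0 : Euc d) 1 ∩ T ⁻¹' A)
      = T ⁻¹' (Set.Ioo (0 : ℝ) 1 • (sphere (0 : Euc d) 1 ∩ A)) := by
    ext x
    simp only [Set.mem_smul, Set.mem_preimage, Set.mem_inter_iff, mem_sphere_zero_iff_norm]
    constructor
    · rintro ⟨t, ht, y, ⟨hy, hyA⟩, rfl⟩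
      exact ⟨t, ht, T y, ⟨by simpa using hy, hyA⟩, by simp⟩
    · rintro ⟨t, ht, y, ⟨hy, hyA⟩, hxy⟩
      exact ⟨t, ht, T.symm y, ⟨by simpa using hy, by simpa using hyA⟩,
        by rw [← map_smul, hxy, T.symm_apply_apply]⟩
  have hvol := (show MeasurePreserving T.toMeasurableEquiv volume volume from
    T.measurePreserving).measure_preimage_equiv (Set.Ioo (0 : ℝ) 1 • (sphere (0 : Euc d) 1 ∩ A))
  rw [LinearIsometryEquiv.coe_toMeasurableEquiv] at hvol
  rw [key, hvol]

lemma integrable_inner_sq_sphereUniform {d : ℕ} (hd : 0 < d) (g : Euc d) :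
    Integrable (fun v => ⟪g, v⟫ ^ 2) (sphereUniform d) := by
  have := isProbabilityMeasure_sphereUniform hd
  refine Integrable.of_bound (C := ‖g‖ ^ 2) (by fun_prop) ?_
  filter_upwards [ae_norm_eq_one_sphereUniform d] with v hv
  have := abs_real_inner_le_norm g v
  rw [hv, mul_one] at this
  rw [norm_pow, Real.norm_eq_abs]
  gcongr

lemma integral_inner_sq_eq_of_norm_eq {d : ℕ} {x y : Euc d} (hxy : ‖x‖ = ‖y‖) :
    ∫ v, ⟪x, v⟫ ^ 2 ∂(sphereUniform d) = ∫ v, ⟪y, v⟫ ^ 2 ∂(sphereUniform d) := by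
  set T := (ℝ ∙ (x - y))ᗮ.reflection
  have hT : T x = y := Submodule.reflection_sub hxy
  rw [← (measurePreserving_sphereUniform T).integral_comp' (f := T.toMeasurableEquiv)
    (fun v => ⟪y, v⟫ ^ 2)]
  refine integral_congr_ae (Filter.Eventually.of_forall fun v => ?_)
  change ⟪x, v⟫ ^ 2 = ⟪y, T v⟫ ^ 2
  rw [← hT, T.inner_map_map]

lemma integral_inner_sq_sphereUniform {d : ℕ} (hd : 0 < d) (g : Euc d) :
    (d : ℝ) * ∫ v, ⟪g, v⟫ ^ 2 ∂(sphereUniform d) = ‖g‖ ^ 2 := by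
  have := isProbabilityMeasure_sphereUniform hd
  let b := EuclideanSpace.basisFun (Fin d) ℝ
  have hb (i : Fin d) : ∫ v, ⟪g, v⟫ ^ 2 ∂(sphereUniform d)
      = ∫ v, ⟪‖g‖ • b i, v⟫ ^ 2 ∂(sphereUniform d) :=
    integral_inner_sq_eq_of_norm_eq (by simp [norm_smul])
  calc (d : ℝ) * ∫ v, ⟪g, v⟫ ^ 2 ∂(sphereUniform d)
      = ∑ i : Fin d, ∫ v, ⟪‖g‖ • b i, v⟫ ^ 2 ∂(sphereUniform d) := by
        rw [← Finset.sum_congr rfl fun i _ => hb i]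
        simp
    _ = ∫ v, ∑ i : Fin d, ⟪‖g‖ • b i, v⟫ ^ 2 ∂(sphereUniform d) :=
        (integral_finsetSum _ fun i _ => integrable_inner_sq_sphereUniform hd _).symm
    _ = ∫ _, ‖g‖ ^ 2 ∂(sphereUniform d) := by
        refine integral_congr_ae ?_
        filter_upwards [ae_norm_eq_one_sphereUniform d] with v hv
        simp only [real_inner_smul_left, mul_pow, ← Finset.mul_sum]
        have := b.sum_sq_norm_inner_right v
        simp only [Real.norm_eq_abs, sq_abs] at this
        rw [this, hv]
        ring
    _ = ‖g‖ ^ 2 := by simp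

lemma norm_gradient_sub_gradient {E : Type*} [NormedAddCommGroup E] [InnerProductSpace ℝ E]
    [CompleteSpace E] (f g : E → ℝ) (x y : E) :
    ‖gradient f x - gradient g y‖ = ‖fderiv ℝ f x - fderiv ℝ g y‖ := by
  rw [gradient, gradient, ← map_sub, LinearIsometryEquiv.norm_map]

/-- Quadratic Taylor bound for a function with `L`-Lipschitz gradient. -/
lemma abs_sub_sub_inner_gradient_le {E : Type*} [NormedAddCommGroup E] [InnerProductSpace ℝ E]
    [CompleteSpace E] {h : E → ℝ} {L : ℝ} (hdiff : Differentiable ℝ h)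
    (hsmooth : ∀ z₁ z₂ : E, ‖gradient h z₁ - gradient h z₂‖ ≤ L * ‖z₁ - z₂‖) (z w : E) :
    |h (z + w) - h z - ⟪gradient h z, w⟫| ≤ L / 2 * ‖w‖ ^ 2 := by
  have hline (t : ℝ) : HasDerivAt (fun t : ℝ => h (z + t • w) - h z - t * ⟪gradient h z, w⟫)
      (⟪gradient h (z + t • w) - gradient h z, w⟫) t := by
    have h1 : HasDerivAt (fun t : ℝ => z + t • w) w t := by
      simpa using ((hasDerivAt_id t).smul_const w).const_add z
    have h2 := (hdiff (z + t • w)).hasGradientAt.hasFDerivAt.comp_hasDerivAt t h1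
    refine ((h2.sub_const (h z)).sub
      ((hasDerivAt_id t).mul_const ⟪gradient h z, w⟫)).congr_deriv ?_
    simp [inner_sub_left]
  have hB (t : ℝ) : HasDerivAt (fun t : ℝ => L / 2 * ‖w‖ ^ 2 * t ^ 2) (L * ‖w‖ ^ 2 * t) t := by
    refine ((hasDerivAt_pow 2 t).const_mul (L / 2 * ‖w‖ ^ 2)).congr_deriv ?_
    norm_num
    ring
  have := image_norm_le_of_norm_deriv_right_le_deriv_boundary (a := 0) (b := 1)
    (fun t _ => (hline t).continuousAt.continuousWithinAt)
    (fun t _ => (hline t).hasDerivWithinAt) (by simp) hB (fun t ht => ?_)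
    (Set.right_mem_Icc.2 zero_le_one)
  · simpa using this
  · calc ‖⟪gradient h (z + t • w) - gradient h z, w⟫‖
        ≤ ‖gradient h (z + t • w) - gradient h z‖ * ‖w‖ := norm_inner_le_norm _ _
      _ ≤ L * ‖z + t • w - z‖ * ‖w‖ := by gcongr; exact hsmooth _ _
      _ = L * ‖w‖ ^ 2 * t := by
        rw [add_sub_cancel_left, norm_smul, Real.norm_of_nonneg ht.1]
        ring

lemma norm_fderiv_le_of_abs_sub_le {E : Type*} [NormedAddCommGroup E] [NormedSpace ℝ E]
    {f : E → ℝ} {G : ℝ} (hG : 0 ≤ G)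
    (hLip : ∀ z₁ z₂ : E, |f z₁ - f z₂| ≤ G * ‖z₁ - z₂‖) (x : E) : ‖fderiv ℝ f x‖ ≤ G :=
  norm_fderiv_le_of_lip' ℝ hG (Filter.Eventually.of_forall fun y => hLip y x)

/-- Differentiation under the integral sign for the ball smoothing. -/
lemma hasFDerivAt_ballSmoothing {d : ℕ} {h : Euc d → ℝ} {G : ℝ} (hG : 0 ≤ G)
    (hC1 : ContDiff ℝ 1 h) (hLip : ∀ z₁ z₂ : Euc d, |h z₁ - h z₂| ≤ G * ‖z₁ - z₂‖)
    {r : ℝ} (hr : 0 < r) (z : Euc d) :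
    HasFDerivAt (fun z' => ∫ u, h (z' + r • u) ∂(ballUniform d))
      (∫ u, fderiv ℝ h (z + r • u) ∂(ballUniform d)) z := by
  have := isProbabilityMeasure_ballUniform d
  have hc := hC1.continuous
  have hc' := hC1.continuous_fderiv one_ne_zero
  refine hasFDerivAt_integral_of_dominated_of_fderiv_le (bound := fun _ => G)
    (F' := fun z' u => fderiv ℝ h (z' + r • u)) Filter.univ_mem
    (Filter.Eventually.of_forall fun z' => ?_) ?_ ?_ ?_ (integrable_const _) ?_
  · exact Continuous.aestronglyMeasurable (by fun_prop)
  · refine Integrable.of_bound (C := |h z| + G * r)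
      (Continuous.aestronglyMeasurable (by fun_prop)) ?_
    filter_upwards [ae_norm_le_one_ballUniform d] with u hu
    have h1 := hLip (z + r • u) z
    rw [add_sub_cancel_left, norm_smul, Real.norm_of_nonneg hr.le] at h1
    have h2 : G * (r * ‖u‖) ≤ G * r := by
      gcongr
      exact mul_le_of_le_one_right hr.le hu
    have h3 := abs_sub_abs_le_abs_sub (h (z + r • u)) (h z)
    rw [Real.norm_eq_abs]
    linarith
  · exact Continuous.aestronglyMeasurable (by fun_prop)
  · exact Filter.Eventually.of_forall fun u x _ => norm_fderiv_le_of_abs_sub_le hG hLip _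
  · refine Filter.Eventually.of_forall fun u x _ => ?_
    rw [hasFDerivAt_comp_add_right]
    exact (hC1.differentiable one_ne_zero _).hasFDerivAt

lemma norm_gradient_ballSmoothing_le {d : ℕ} {h : Euc d → ℝ} {G : ℝ} (hG : 0 ≤ G)
    (hC1 : ContDiff ℝ 1 h) (hLip : ∀ z₁ z₂ : Euc d, |h z₁ - h z₂| ≤ G * ‖z₁ - z₂‖)
    {r : ℝ} (hr : 0 < r) (z : Euc d) :
    ‖gradient (fun z' => ∫ u, h (z' + r • u) ∂(ballUniform d)) z‖ ≤ G := by
  have := isProbabilityMeasure_ballUniform d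
  rw [gradient, LinearIsometryEquiv.norm_map, (hasFDerivAt_ballSmoothing hG hC1 hLip hr z).fderiv]
  simpa using norm_integral_le_of_norm_le_const (μ := ballUniform d)
    (Filter.Eventually.of_forall fun u => norm_fderiv_le_of_abs_sub_le hG hLip (z + r • u))

lemma norm_gradient_ballSmoothing_sub_le {d : ℕ} {h : Euc d → ℝ} {G L : ℝ} (hG : 0 ≤ G)
    (hL : 0 ≤ L) (hC1 : ContDiff ℝ 1 h)
    (hLip : ∀ z₁ z₂ : Euc d, |h z₁ - h z₂| ≤ G * ‖z₁ - z₂‖)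
    (hsmooth : ∀ z₁ z₂ : Euc d, ‖gradient h z₁ - gradient h z₂‖ ≤ L * ‖z₁ - z₂‖)
    {r : ℝ} (hr : 0 < r) (z : Euc d) :
    ‖gradient (fun z' => ∫ u, h (z' + r • u) ∂(ballUniform d)) z - gradient h z‖ ≤ L * r := by
  have := isProbabilityMeasure_ballUniform d
  have hc' := hC1.continuous_fderiv one_ne_zero
  rw [norm_gradient_sub_gradient, (hasFDerivAt_ballSmoothing hG hC1 hLip hr z).fderiv]
  have hint : Integrable (fun u => fderiv ℝ h (z + r • u)) (ballUniform d) :=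
    Integrable.of_bound (C := G) (Continuous.aestronglyMeasurable (by fun_prop))
      (Filter.Eventually.of_forall fun u => norm_fderiv_le_of_abs_sub_le hG hLip _)
  have hconst : fderiv ℝ h z = ∫ _, fderiv ℝ h z ∂(ballUniform d) := by simp
  rw [hconst, ← integral_sub hint (integrable_const _)]
  have hbound : ∀ᵐ u ∂(ballUniform d), ‖fderiv ℝ h (z + r • u) - fderiv ℝ h z‖ ≤ L * r := by
    filter_upwards [ae_norm_le_one_ballUniform d] with u hu
    rw [← norm_gradient_sub_gradient]
    refine (hsmooth _ _).trans ?_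
    rw [add_sub_cancel_left, norm_smul, Real.norm_of_nonneg hr.le]
    gcongr
    exact mul_le_of_le_one_right hr.le hu
  simpa using norm_integral_le_of_norm_le_const hbound

/-- In dimension one every unit vector spans the whole space. -/
lemma inner_smul_self_of_norm_eq_one (g v : Euc 1) (hv : ‖v‖ = 1) : ⟪g, v⟫ • v = g := by
  have h1 : v 0 * v 0 = 1 := by
    have := EuclideanSpace.norm_sq_eq v
    simp only [hv, Finset.univ_unique, Finset.sum_singleton, Real.norm_eq_abs, sq_abs] at this
    simpa [sq] using this.symm
  ext i
  fin_cases i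
  simp only [PiLp.inner_apply, Finset.univ_unique, Finset.sum_singleton, PiLp.smul_apply,
    smul_eq_mul]
  simp
  linear_combination g 0 * h1

lemma norm_add_sq_le_three {E : Type*} [NormedAddCommGroup E] (x y : E) :
    ‖x + y‖ ^ 2 ≤ 3 * ‖x‖ ^ 2 + 3 / 2 * ‖y‖ ^ 2 := by
  have h1 : ‖x + y‖ ^ 2 ≤ (‖x‖ + ‖y‖) ^ 2 := by gcongr; exact norm_add_le x y
  nlinarith [sq_nonneg (2 * ‖x‖ - ‖y‖)]

/-- **Variance bound for the two-point gradient estimator.**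
If `h : ℝ^d → ℝ` is continuously differentiable, `G`-Lipschitz and `L`-smooth, `r > 0`,
`h^r(z) = E_{v̄ ∼ U(B_d)}[h(z + r v̄)]` and `G_h(z;r;v) = (d/r)(h(z + r v) - h(z)) v`, then
`E_{v ∼ U(S^{d-1})}[‖G_h(z;r;v) - ∇h^r(z)‖²] ≤ 9 d² G²/(d+2) + 3 d² L² r²/4` for every `z`. -/
theorem two_point_estimator_variance_bound
    {d : ℕ} (hd : 0 < d) (h : Euc d → ℝ) (G L : ℝ)
    (hC1 : ContDiff ℝ 1 h)
    (hLip : ∀ z₁ z₂ : Euc d, |h z₁ - h z₂| ≤ G * ‖z₁ - z₂‖)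
    (hsmooth : ∀ z₁ z₂ : Euc d, ‖gradient h z₁ - gradient h z₂‖ ≤ L * ‖z₁ - z₂‖)
    (r : ℝ) (hr : 0 < r) (z : Euc d) :
    (∫ v, ‖(((d : ℝ) / r) * (h (z + r • v) - h z)) • v
        - gradient (fun z' => ∫ u, h (z' + r • u) ∂(ballUniform d)) z‖ ^ 2
      ∂(sphereUniform d))
      ≤ 9 * (d : ℝ) ^ 2 * G ^ 2 / ((d : ℝ) + 2) + 3 * (d : ℝ) ^ 2 * L ^ 2 * r ^ 2 / 4 := by
  have := isProbabilityMeasure_sphereUniform hd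
  set m := gradient (fun z' => ∫ u, h (z' + r • u) ∂(ballUniform d)) z with hm
  set g := gradient h z with hg
  let e : Euc d := EuclideanSpace.single ⟨0, hd⟩ 1
  have he : ‖e - 0‖ = 1 := by simp [e]
  have hG : 0 ≤ G := by simpa only [he, mul_one] using (abs_nonneg _).trans (hLip e 0)
  have hL : 0 ≤ L := by
    simpa only [he, mul_one] using (norm_nonneg _).trans (hsmooth e 0)
  have hmG : ‖m‖ ≤ G := norm_gradient_ballSmoothing_le hG hC1 hLip hr z
  have hmg : ‖m - g‖ ≤ L * r :=
    norm_gradient_ballSmoothing_sub_le hG hL hC1 hLip hsmooth hr z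
  have hgG : ‖g‖ ≤ G := by
    rw [hg, gradient, LinearIsometryEquiv.norm_map]
    exact norm_fderiv_le_of_abs_sub_le hG hLip z
  have hrem (v : Euc d) (hv : ‖v‖ = 1) :
      ‖(((d : ℝ) / r) * (h (z + r • v) - h z)) • v - (d : ℝ) • ⟪g, v⟫ • v‖
        ≤ d * L * r / 2 := by
    have h1 := abs_sub_sub_inner_gradient_le (hC1.differentiable one_ne_zero) hsmooth z (r • v)
    rw [norm_smul, hv, mul_one, Real.norm_of_nonneg hr.le, real_inner_smul_right] at h1
    have h2 : ((d : ℝ) / r * (h (z + r • v) - h z)) • v - (d : ℝ) • ⟪g, v⟫ • v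
        = ((d : ℝ) / r * (h (z + r • v) - h z - r * ⟪g, v⟫)) • v := by
      rw [smul_smul, ← sub_smul]
      congr 1
      field_simp
    rw [h2, norm_smul, hv, mul_one, norm_mul, Real.norm_of_nonneg (by positivity),
      Real.norm_eq_abs]
    calc (d : ℝ) / r * |h (z + r • v) - h z - r * ⟪g, v⟫| ≤ d / r * (L / 2 * r ^ 2) := by gcongr
      _ = d * L * r / 2 := by field_simp
  rcases Nat.lt_or_ge 1 d with hd2 | hd1
  · have hd2' : (2 : ℝ) ≤ d := by exact_mod_cast hd2
    have hpt : ∀ᵐ v ∂(sphereUniform d),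
        ‖(((d : ℝ) / r) * (h (z + r • v) - h z)) • v - m‖ ^ 2
          ≤ 3 * (d * L * r / 2) ^ 2 + 3 / 2 * ‖m‖ ^ 2
            + (3 / 2 * ((d : ℝ) ^ 2 + d) * ⟪g, v⟫ ^ 2 + 3 / 2 * d * ⟪m, v⟫ ^ 2) := by
      filter_upwards [ae_norm_eq_one_sphereUniform d] with v hv
      have h1 := norm_add_sq_le_three
        ((((d : ℝ) / r) * (h (z + r • v) - h z)) • v - (d : ℝ) • ⟪g, v⟫ • v)
        ((d : ℝ) • ⟪g, v⟫ • v - m)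
      rw [sub_add_sub_cancel] at h1
      have h2 : ‖(((d : ℝ) / r) * (h (z + r • v) - h z)) • v - (d : ℝ) • ⟪g, v⟫ • v‖ ^ 2
          ≤ (d * L * r / 2) ^ 2 := by gcongr; exact hrem v hv
      have h3 : ‖(d : ℝ) • ⟪g, v⟫ • v - m‖ ^ 2
          = (d : ℝ) ^ 2 * ⟪g, v⟫ ^ 2 - 2 * d * (⟪g, v⟫ * ⟪m, v⟫) + ‖m‖ ^ 2 := by
        rw [norm_sub_sq_real, smul_smul, norm_smul, hv, mul_one, real_inner_smul_left,
          Real.norm_eq_abs, sq_abs, real_inner_comm m v]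
        ring
      have h4 : 0 ≤ (d : ℝ) * (⟪g, v⟫ + ⟪m, v⟫) ^ 2 := by positivity
      rw [h3] at h1
      linarith
    have hig := (integrable_inner_sq_sphereUniform hd g).const_mul (3 / 2 * ((d : ℝ) ^ 2 + d))
    have him := (integrable_inner_sq_sphereUniform hd m).const_mul (3 / 2 * (d : ℝ))
    have hmono := integral_mono_of_nonneg (Filter.Eventually.of_forall fun v => by positivity)
      ((integrable_const _).add (hig.add him)) hpt
    refine hmono.trans ?_
    rw [integral_add' (integrable_const _) (hig.add him), integral_add' hig him,
      integral_const_mul, integral_const_mul]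
    simp only [integral_const, probReal_univ, one_smul]
    have hQg := integral_inner_sq_sphereUniform hd g
    have hQm := integral_inner_sq_sphereUniform hd m
    have hg2 : ‖g‖ ^ 2 ≤ G ^ 2 := by gcongr
    have hm2 : ‖m‖ ^ 2 ≤ G ^ 2 := by gcongr
    have hsum : 3 / 2 * ((d : ℝ) + 3) * G ^ 2 ≤ 9 * (d : ℝ) ^ 2 * G ^ 2 / ((d : ℝ) + 2) := by
      rw [le_div_iff₀ (by positivity)]
      have : 3 / 2 * ((d : ℝ) + 3) * (d + 2) ≤ 9 * (d : ℝ) ^ 2 := by nlinarith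
      nlinarith [mul_le_mul_of_nonneg_right this (sq_nonneg G)]
    have hgd : ((d : ℝ) + 1) * ‖g‖ ^ 2 ≤ (d + 1) * G ^ 2 := by gcongr
    calc _ = 3 * (d : ℝ) ^ 2 * L ^ 2 * r ^ 2 / 4 + 3 / 2 * ‖m‖ ^ 2
          + (3 / 2 * (((d : ℝ) + 1) * ‖g‖ ^ 2) + 3 / 2 * ‖m‖ ^ 2) := by
          rw [← hQg, ← hQm]
          ring
      _ ≤ _ := by linarith
  · obtain rfl : d = 1 := by omega
    have hpt : ∀ᵐ v ∂(sphereUniform 1),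
        ‖((((1 : ℕ) : ℝ) / r) * (h (z + r • v) - h z)) • v - m‖ ^ 2
          ≤ 3 * G ^ 2 + 3 * L ^ 2 * r ^ 2 / 4 := by
      filter_upwards [ae_norm_eq_one_sphereUniform 1] with v hv
      have h1 := hrem v hv
      rw [inner_smul_self_of_norm_eq_one g v hv, Nat.cast_one, one_smul, one_mul] at h1
      rw [Nat.cast_one]
      set X := ((1 : ℝ) / r * (h (z + r • v) - h z)) • v with hX
      have hXG : ‖X‖ ≤ G := by
        have h2 := hLip (z + r • v) z
        rw [add_sub_cancel_left, norm_smul, hv, mul_one, Real.norm_of_nonneg hr.le] at h2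
        rw [hX, norm_smul, hv, mul_one, norm_mul, Real.norm_of_nonneg (by positivity),
          Real.norm_eq_abs]
        calc 1 / r * |h (z + r • v) - h z| ≤ 1 / r * (G * r) := by gcongr
          _ = G := by field_simp
      have h3 : ‖X - m‖ ≤ 2 * G := by linarith [norm_sub_le X m]
      have h4 : ‖X - m‖ ≤ 3 / 2 * (L * r) := by
        have := norm_sub_le_norm_sub_add_norm_sub X g m
        rw [norm_sub_rev g m] at this
        linarith
      have h5 : ‖X - m‖ ^ 2 ≤ (2 * G) ^ 2 := by gcongr
      have h6 : ‖X - m‖ ^ 2 ≤ (3 / 2 * (L * r)) ^ 2 := by gcongr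
      linarith [sq_nonneg (L * r), sq_nonneg G]
    have hmono := integral_mono_of_nonneg (Filter.Eventually.of_forall fun v => by positivity)
      (integrable_const _) hpt
    refine hmono.trans (le_of_eq ?_)
    simp only [integral_const, probReal_univ, one_smul]
    norm_num
    ring

end
end
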